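/- Let d ≥ 0 and let α, β be angles with 0 ≤ α ≤ π and α ≤ β ≤ 2π − α. If √((d + sin β + sin α)² + (cos β + cos α)²) ≥ 2, then there exists a bounded-curvature path from configuration (0,0,α) to (d,0,β) of length at most d + 2π. -/

import Mathlib

open Real

/-- A bounded-curvature path of length `T ≥ 0` from configuration `(x₀, y₀, α)`
to configuration `(x₁, y₁, β)`: a map `γ : ℝ → ℝ²` (Euclidean plane) that is
continuously differentiable on `[0, T]` with unit-speed derivative `γ'`, whose
derivative is `1`-Lipschitz on `[0, T]` (curvature bound `≤ 1`), starting at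
`(x₀, y₀)` with direction `(cos α, sin α)` and ending at `(x₁, y₁)` with
direction `(cos β, sin β)`. -/
def IsBCPath (T x₀ y₀ α x₁ y₁ β : ℝ) (γ : ℝ → EuclideanSpace ℝ (Fin 2)) : Prop :=
  0 ≤ T ∧
  ∃ γ' : ℝ → EuclideanSpace ℝ (Fin 2),
    (∀ t ∈ Set.Icc (0:ℝ) T, HasDerivWithinAt γ (γ' t) (Set.Icc 0 T) t) ∧
    ContinuousOn γ' (Set.Icc 0 T) ∧
    (∀ t ∈ Set.Icc (0:ℝ) T, ‖γ' t‖ = 1) ∧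
    LipschitzOnWith 1 γ' (Set.Icc 0 T) ∧
    γ 0 = ![x₀, y₀] ∧ γ' 0 = ![Real.cos α, Real.sin α] ∧
    γ T = ![x₁, y₁] ∧ γ' T = ![Real.cos β, Real.sin β]

noncomputable def hd (α ε a s t : ℝ) : ℝ := α + ε * min t a - max (t - a - s) 0

lemma hd_lip (α ε a s : ℝ) (hε : ε = 1 ∨ ε = -1) (hs : 0 ≤ s) (x y : ℝ) :
    |hd α ε a s x - hd α ε a s y| ≤ |x - y| := by
  unfold hd
  have key : ∀ x y : ℝ, x ≤ y → |(α + ε * min x a - max (x - a - s) 0) - (α + ε * min y a - max (y - a - s) 0)| ≤ |x - y| := by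
    intro x y hxy
    rw [abs_of_nonpos (by linarith : x - y ≤ 0), abs_le]
    rcases hε with rfl | rfl <;>
    rcases le_total x a with h1 | h1 <;> rcases le_total y a with h2 | h2 <;>
    rcases le_total (x - a - s) 0 with h3 | h3 <;> rcases le_total (y - a - s) 0 with h4 | h4 <;>
    simp only [min_eq_left, min_eq_right, max_eq_left, max_eq_right, h1, h2, h3, h4] <;>
    constructor <;> linarith
  rcases le_total x y with h | h
  · exact key x y h
  · rw [abs_sub_comm, abs_sub_comm x y]; exact key y x h

lemma hd_cont (α ε a s : ℝ) : Continuous (hd α ε a s) := by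
  unfold hd; fun_prop

lemma int_cos (ε c u v : ℝ) (hε : ε = 1 ∨ ε = -1) :
    ∫ t in u..v, cos (c + ε * t) = ε * (sin (c + ε * v) - sin (c + ε * u)) := by
  rw [intervalIntegral.integral_eq_sub_of_hasDerivAt (f := fun t => ε * sin (c + ε * t))]
  · ring
  · intro x _
    have h : HasDerivAt (fun t => c + ε * t) ε x := by
      simpa using ((hasDerivAt_id x).const_mul ε).const_add c
    have := (h.sin).const_mul ε
    refine this.congr_deriv ?_
    rcases hε with rfl | rfl <;> ring
  · exact Continuous.intervalIntegrable (by fun_prop) _ _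

lemma int_sin (ε c u v : ℝ) (hε : ε = 1 ∨ ε = -1) :
    ∫ t in u..v, sin (c + ε * t) = - ε * (cos (c + ε * v) - cos (c + ε * u)) := by
  rw [intervalIntegral.integral_eq_sub_of_hasDerivAt (f := fun t => -ε * cos (c + ε * t))]
  · ring
  · intro x _
    have h : HasDerivAt (fun t => c + ε * t) ε x := by
      simpa using ((hasDerivAt_id x).const_mul ε).const_add c
    have := (h.cos).const_mul (-ε)
    refine this.congr_deriv ?_
    rcases hε with rfl | rfl <;> ring
  · exact Continuous.intervalIntegrable (by fun_prop) _ _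

lemma int_split (f : ℝ → ℝ) (hf : Continuous f) (α ε a s b : ℝ) (ha : 0 ≤ a) (hs : 0 ≤ s) (hb : 0 ≤ b) :
    ∫ t in (0:ℝ)..(a + s + b), f (hd α ε a s t) =
      (∫ t in (0:ℝ)..a, f (α + ε * t)) + s * f (α + ε * a)
        + ∫ t in (a+s)..(a+s+b), f ((α + ε * a + a + s) + (-1) * t) := by
  have hc : Continuous (fun t => f (hd α ε a s t)) := hf.comp (hd_cont α ε a s)
  rw [← intervalIntegral.integral_add_adjacent_intervals (b := a + s)
      (hc.intervalIntegrable _ _) (hc.intervalIntegrable _ _),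
    ← intervalIntegral.integral_add_adjacent_intervals (b := a)
      (hc.intervalIntegrable _ _) (hc.intervalIntegrable _ _)]
  congr 1
  · congr 1
    · apply intervalIntegral.integral_congr
      intro t ht
      rw [Set.uIcc_of_le ha] at ht
      simp only [hd]
      rw [min_eq_left ht.2, max_eq_right (by linarith [ht.2])]; simp
    · have : ∫ t in a..(a+s), f (hd α ε a s t) = ∫ t in a..(a+s), f (α + ε * a) := by
        apply intervalIntegral.integral_congr
        intro t ht
        rw [Set.uIcc_of_le (by linarith)] at ht
        simp only [hd]
        rw [min_eq_right ht.1, max_eq_right (by linarith [ht.2])]; simp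
      rw [this]; simp
  · apply intervalIntegral.integral_congr
    intro t ht
    rw [Set.uIcc_of_le (by linarith)] at ht
    simp only [hd]
    rw [min_eq_right (by linarith [ht.1]), max_eq_left (by linarith [ht.1])]
    congr 1; ring

lemma path_exists (α β θ d ε a s b : ℝ) (hε : ε = 1 ∨ ε = -1)
    (ha : 0 ≤ a) (hs : 0 ≤ s) (hb : 0 ≤ b) (hθ : θ = α + ε * a)
    (hcb : cos (θ - b) = cos β) (hsb : sin (θ - b) = sin β)
    (hx : ε * (sin θ - sin α) + s * cos θ - (sin β - sin θ) = d)
    (hy : -ε * (cos θ - cos α) + s * sin θ + (cos β - cos θ) = 0) :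
    ∃ (γ : ℝ → EuclideanSpace ℝ (Fin 2)), IsBCPath (a + s + b) 0 0 α d 0 β γ := by
  have hcc : Continuous (fun t => cos (hd α ε a s t)) := continuous_cos.comp (hd_cont α ε a s)
  have hcs : Continuous (fun t => sin (hd α ε a s t)) := continuous_sin.comp (hd_cont α ε a s)
  have hlip : LipschitzWith 1 (fun t => (!₂[cos (hd α ε a s t), sin (hd α ε a s t)] : EuclideanSpace ℝ (Fin 2))) := by
    apply LipschitzWith.of_dist_le_mul
    intro x y
    rw [EuclideanSpace.dist_eq]
    simp only [Fin.sum_univ_two, NNReal.coe_one, one_mul]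
    apply Real.sqrt_le_iff.2
    refine ⟨dist_nonneg, ?_⟩
    simp only [Real.dist_eq, sq_abs]
    have h1 := hd_lip α ε a s hε hs x y
    have h2 := Real.one_sub_sq_div_two_le_cos (x := hd α ε a s x - hd α ε a s y)
    rw [cos_sub] at h2
    have h3 := sq_le_sq.2 h1
    simp
    nlinarith [sin_sq_add_cos_sq (hd α ε a s x), sin_sq_add_cos_sq (hd α ε a s y)]
  have h0 : hd α ε a s 0 = α := by
    unfold hd
    rw [min_eq_left ha, max_eq_right (by linarith)]; simp
  have hT : hd α ε a s (a + s + b) = θ - b := by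
    unfold hd
    rw [min_eq_right (by linarith), max_eq_left (by linarith), hθ]; ring
  refine ⟨fun t => !₂[∫ u in (0:ℝ)..t, cos (hd α ε a s u), ∫ u in (0:ℝ)..t, sin (hd α ε a s u)],
    by positivity, fun t => !₂[cos (hd α ε a s t), sin (hd α ε a s t)], ?_, ?_, ?_, ?_, ?_, ?_, ?_, ?_⟩
  · intro t _
    apply HasDerivAt.hasDerivWithinAt
    have hpi : HasDerivAt (fun t => (![∫ u in (0:ℝ)..t, cos (hd α ε a s u), ∫ u in (0:ℝ)..t, sin (hd α ε a s u)] : Fin 2 → ℝ))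
        ![cos (hd α ε a s t), sin (hd α ε a s t)] t := by
      rw [hasDerivAt_pi]
      intro i
      fin_cases i
      · exact (hcc.integral_hasStrictDerivAt 0 t).hasDerivAt
      · exact (hcs.integral_hasStrictDerivAt 0 t).hasDerivAt
    exact ((PiLp.continuousLinearEquiv 2 ℝ (fun _ : Fin 2 => ℝ)).symm.toContinuousLinearMap.hasFDerivAt.comp_hasDerivAt t hpi)
  · exact hlip.continuous.continuousOn
  · intro t _
    simp [EuclideanSpace.norm_eq]
  · exact hlip.lipschitzOnWith
  · simp
  · simp [h0]
  · have e1 := int_split cos continuous_cos α ε a s b ha hs hb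
    have e2 := int_split sin continuous_sin α ε a s b ha hs hb
    rw [int_cos _ _ _ _ hε, int_cos _ _ _ _ (Or.inr rfl)] at e1
    rw [int_sin _ _ _ _ hε, int_sin _ _ _ _ (Or.inr rfl)] at e2
    have r1 : α + ε * a + a + s + -1 * (a + s + b) = θ - b := by rw [hθ]; ring
    have r2 : α + ε * a + a + s + -1 * (a + s) = θ := by rw [hθ]; ring
    rw [r1, r2, ← hθ] at e1 e2
    simp only [mul_zero, add_zero, hcb, hsb] at e1 e2
    simp [e1, e2]
    constructor <;> linarith
  · simp [hT, hcb, hsb]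

lemma caseR (d α β : ℝ) (hd : 0 ≤ d)
    (hα0 : 0 ≤ α) (hαπ : α ≤ π) (hαβ : α ≤ β) (hβ : β ≤ 2 * π - α)
    (h : 1 - cos (β - α) ≤ d * sin α) :
    ∃ (T : ℝ) (γ : ℝ → EuclideanSpace ℝ (Fin 2)),
      IsBCPath T 0 0 α d 0 β γ ∧ T ≤ d + 2 * π := by
  set p := d + sin β - sin α with hp
  set q := cos α - cos β with hq
  have hq0 : 0 ≤ q := by
    have e : q = 2 * sin ((α + β)/2) * sin ((β - α)/2) := by
      have := cos_sub_cos α β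
      rw [hq, this, show (α - β)/2 = -((β - α)/2) by ring, sin_neg]; ring
    have := sin_nonneg_of_nonneg_of_le_pi (x := (α+β)/2) (by linarith) (by linarith)
    have := sin_nonneg_of_nonneg_of_le_pi (x := (β-α)/2) (by linarith) (by linarith)
    rw [e]; positivity
  set s := √(p^2+q^2) with hs
  have hs0 : 0 ≤ s := sqrt_nonneg _
  have hss : s^2 = p^2+q^2 := Real.sq_sqrt (by positivity)
  have hsin : sin β - sin α ≤ β - α := by
    have := sin_sub_sin β α
    have h1 := sin_le (x := (β-α)/2) (by linarith)
    have h0 := sin_nonneg_of_nonneg_of_le_pi (x := (β-α)/2) (by linarith) (by linarith)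
    nlinarith [cos_le_one ((β+α)/2)]
  have hsd : s ≤ d + (β - α) := by
    apply Real.sqrt_le_iff.2
    refine ⟨by linarith, ?_⟩
    have h2 := Real.one_sub_sq_div_two_le_cos (x := β - α)
    rw [cos_sub] at h2
    rw [hp, hq]
    nlinarith [sin_sq_add_cos_sq α, sin_sq_add_cos_sq β]
  obtain ⟨θ, hθ0, hθα, hpθ, hqθ⟩ : ∃ θ, 0 ≤ θ ∧ θ ≤ α ∧ p = s * cos θ ∧ q = s * sin θ := by
    rcases eq_or_lt_of_le hs0 with hz | hpos
    · refine ⟨α, hα0, le_rfl, ?_, ?_⟩ <;> rw [← hz] <;> rw [← hz] at hss <;> nlinarith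
    have hca : cos (arccos (p/s)) = p/s := by
      apply cos_arccos
      · rw [le_div_iff₀ hpos]; nlinarith
      · rw [div_le_iff₀ hpos]; nlinarith
    have h1 : p = s * cos (arccos (p/s)) := by
      rw [hca]; field_simp
    have h2 : q = s * sin (arccos (p/s)) := by
      rw [sin_arccos, show 1 - (p/s)^2 = (q/s)^2 by field_simp; linarith,
        Real.sqrt_sq (by positivity)]; field_simp
    set θ := arccos (p/s) with hθ
    have hθ0 : 0 ≤ θ := arccos_nonneg _
    have hθπ : θ ≤ π := arccos_le_pi _
    have h3 : 0 ≤ s * sin (α - θ) := by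
      rw [sin_sub]
      have : s * (sin α * cos θ - cos α * sin θ) = sin α * p - cos α * q := by rw [h1, h2]; ring
      rw [this, hp, hq]
      rw [cos_sub] at h
      nlinarith [sin_sq_add_cos_sq α]
    have h4 : 0 ≤ sin (α - θ) := nonneg_of_mul_nonneg_right h3 hpos
    by_cases hle : θ ≤ α
    · exact ⟨θ, hθ0, hle, h1, h2⟩
    push Not at hle
    rcases eq_or_lt_of_le hα0 with hz | hαp
    · rw [← hz] at h hp hq
      simp at h hp hq
      have hcb : cos β = 1 := le_antisymm (cos_le_one _) h
      have hsb : sin β = 0 := by nlinarith [sin_sq_add_cos_sq β]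
      rw [hsb] at hp
      rw [hcb] at hq
      have : s = d := by
        rw [hs, hp, hq]; simp [hd]
      refine ⟨0, le_rfl, hα0, ?_, ?_⟩ <;> simp [this] <;> linarith
    · exfalso
      have := sin_neg_of_neg_of_neg_pi_lt (x := α - θ) (by linarith) (by linarith)
      linarith
  obtain ⟨γ, hγ⟩ := path_exists α β θ d (-1) (α - θ) s (θ - β + 2 * π) (Or.inr rfl)
    (by linarith) hs0 (by linarith) (by ring)
    (by rw [show θ - (θ - β + 2 * π) = β - 2 * π by ring, cos_sub_two_pi])
    (by rw [show θ - (θ - β + 2 * π) = β - 2 * π by ring, sin_sub_two_pi])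
    (by linarith) (by linarith)
  exact ⟨_, γ, hγ, by linarith⟩

lemma len_bound (d α β θ : ℝ) (hd : 0 ≤ d)
    (hα0 : 0 ≤ α) (hβ : β ≤ 2 * π - α)
    (hαθ : α ≤ θ) (hθπ : θ ≤ π) (hθβ : θ < β)
    (hF : d * sin θ + cos (θ - β) + cos (θ - α) = 2) :
    2 * θ - α - β + (d * cos θ - sin (θ - β) - sin (θ - α)) ≤ d := by
  obtain ⟨φ, hφ⟩ : ∃ φ, φ = θ - (α + β)/2 := ⟨_, rfl⟩
  obtain ⟨δ, hδ⟩ : ∃ δ, δ = (β - α)/2 := ⟨_, rfl⟩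
  have e1 : θ - β = φ - δ := by rw [hφ, hδ]; ring
  have e2 : θ - α = φ + δ := by rw [hφ, hδ]; ring
  rw [e1, e2, cos_sub, cos_add] at hF
  rw [e1, e2, sin_sub, sin_add]
  have hc1 := cos_le_one θ
  suffices 2 * φ - 2 * sin φ * cos δ ≤ d * (1 - cos θ) by linarith
  rcases le_or_gt φ 0 with h0 | h0
  · have h1 : 0 ≤ d * (1 - cos θ) := mul_nonneg hd (by linarith)
    have h2 : |sin φ * cos δ| ≤ |φ| := by
      rw [abs_mul]
      have := abs_sin_le_abs (x := φ)
      nlinarith [abs_cos_le_one δ, abs_nonneg (sin φ), abs_nonneg (cos δ)]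
    rw [abs_of_nonpos h0] at h2
    have := (abs_le.1 h2).1
    linarith
  · have h2φ : 2 * φ < θ := by linarith
    have hcφ : 0 < cos φ := cos_pos_of_mem_Ioo ⟨by linarith, by linarith⟩
    have hsφ : 0 < sin φ := sin_pos_of_pos_of_lt_pi h0 (by linarith)
    have hc1φ : cos φ < 1 := by nlinarith [sin_sq_add_cos_sq φ]
    have hW : 0 < 1 - cos φ * cos δ := by nlinarith [cos_le_one δ]
    have hsθ : 0 < sin θ := by
      have := sin_nonneg_of_nonneg_of_le_pi (x := θ) (by linarith) hθπ
      rcases eq_or_lt_of_le this with hz | hz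
      · rw [← hz] at hF; linarith
      · exact hz
    have hmono : cos (θ - φ) ≤ cos φ := cos_le_cos_of_nonneg_of_le_pi h0.le (by linarith) (by linarith)
    rw [cos_sub] at hmono
    have hφs : φ * cos φ ≤ sin φ := by
      have := Real.le_tan h0.le (by linarith)
      rw [tan_eq_sin_div_cos, le_div_iff₀ hcφ] at this
      exact this
    have hA : d * sin θ = 2 * (1 - cos φ * cos δ) := by linarith
    have hB : 2 * (1 - cos φ * cos δ) * sin φ ≤ d * (1 - cos θ) * cos φ := by
      refine le_of_mul_le_mul_right ?_ hsθ
      have : d * (1 - cos θ) * cos φ * sin θ = 2 * (1 - cos φ * cos δ) * ((1 - cos θ) * cos φ) := by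
        rw [← hA]; ring
      rw [this, mul_assoc]
      apply mul_le_mul_of_nonneg_left _ (by linarith)
      linarith
    refine le_of_mul_le_mul_right ?_ hcφ
    linarith

lemma Fpos (d α β : ℝ) (hd : 0 ≤ d)
    (hα0 : 0 ≤ α) (hαβ : α ≤ β) (hβ : β ≤ 2 * π - α) 
    (hl : 2 * (1 - cos (β - α)) ≤ d^2 + 2 * d * (sin α + sin β))
    (h : d * sin α < 1 - cos (β - α)) : 0 ≤ d * cos α + sin (β - α) := by
  by_contra hn
  push Not at hn
  obtain ⟨δ, hδ⟩ : ∃ δ, δ = (β - α)/2 := ⟨_, rfl⟩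
  have e : β - α = 2 * δ := by linarith
  have hsum : sin α + sin β = 2 * sin (α + δ) * cos δ := by
    have : β = (α + δ) + δ := by linarith
    have h2 : sin α = sin ((α + δ) - δ) := by congr 1; ring
    rw [this, sin_add, h2, sin_sub]; ring
  rw [hsum] at hl
  rw [e, cos_two_mul] at hl h
  rw [e, sin_two_mul] at hn
  have hsa : 0 ≤ sin α := sin_nonneg_of_nonneg_of_le_pi hα0 (by linarith)
  have hsd : 0 ≤ sin δ := sin_nonneg_of_nonneg_of_le_pi (by linarith) (by linarith)
  have hsσ : 0 ≤ sin (α + δ) := sin_nonneg_of_nonneg_of_le_pi (by linarith) (by linarith)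
  have id := sin_sq_add_cos_sq δ
  have hda := mul_nonneg hd hsa
  have hsd' : 0 < sin δ := by
    rcases eq_or_lt_of_le hsd with hz | hz
    · rw [← hz] at id; nlinarith
    · exact hz
  rcases le_or_gt 0 (cos δ) with hc | hc
  · have := mul_nonneg hd hsσ
    rw [sin_add] at this
    have h1 : (d * sin α) * cos δ ≤ (2 * sin δ ^2) * cos δ := mul_le_mul_of_nonneg_right (by linarith) hc
    have h2 : (d * cos α) * sin δ < (- (2 * sin δ * cos δ)) * sin δ := mul_lt_mul_of_pos_right (by linarith) hsd'
    linarith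
  · have hδ2 : π / 2 < δ := by
      by_contra hh
      push Not at hh
      have := cos_nonneg_of_neg_pi_div_two_le_of_le (x := δ) (by linarith) hh
      linarith
    have hca : 0 ≤ cos α := cos_nonneg_of_neg_pi_div_two_le_of_le (by linarith) (by linarith)
    have hdc := mul_nonneg hd hca
    have h1 : (d * sin α)^2 < (2 * sin δ ^2)^2 := pow_lt_pow_left₀ (by linarith) hda (by norm_num)
    have h2 : (d * cos α)^2 < (-(2 * sin δ * cos δ))^2 := pow_lt_pow_left₀ (by linarith) hdc (by norm_num)
    have h3 : d^2 < 4 * sin δ ^2 := by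
      have e1 : (d * sin α)^2 + (d * cos α)^2 = d^2 := by
        have := sin_sq_add_cos_sq α
        linear_combination d^2 * this
      have e2 : (2 * sin δ ^2)^2 + (-(2 * sin δ * cos δ))^2 = 4 * sin δ ^2 := by
        linear_combination 4 * sin δ ^2 * id
      linarith
    have h4 : 0 ≤ d * sin (α + δ) * (- cos δ) := mul_nonneg (mul_nonneg hd hsσ) (by linarith)
    linarith

/-- Let `d ≥ 0` and `0 ≤ α ≤ π`, `α ≤ β ≤ 2π - α`.  If the
left starting disk and the right final disk are disjoint, i.e.
`√((d + sin β + sin α)² + (cos β + cos α)²) ≥ 2`, then there is a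
bounded-curvature path from `(0, 0, α)` to `(d, 0, β)` of length at most
`d + 2π`. -/
theorem case_c_upper_bound (d α β : ℝ) (hd : 0 ≤ d)
    (hα0 : 0 ≤ α) (hαπ : α ≤ π) (hαβ : α ≤ β) (hβ : β ≤ 2 * π - α)
    (hdisj : 2 ≤ Real.sqrt ((d + Real.sin β + Real.sin α) ^ 2 +
      (Real.cos β + Real.cos α) ^ 2)) :
    ∃ (T : ℝ) (γ : ℝ → EuclideanSpace ℝ (Fin 2)),
      IsBCPath T 0 0 α d 0 β γ ∧ T ≤ d + 2 * π := by
  rcases le_or_gt (1 - cos (β - α)) (d * sin α) with h | h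
  · exact caseR d α β hd hα0 hαπ hαβ hβ h
  obtain ⟨p, hp⟩ : ∃ p, p = d + sin β + sin α := ⟨_, rfl⟩
  obtain ⟨q, hq⟩ : ∃ q, q = cos β + cos α := ⟨_, rfl⟩
  rw [← hp, ← hq] at hdisj
  obtain ⟨l, hl⟩ : ∃ l, l = √(p^2+q^2) := ⟨_, rfl⟩
  have hll : l^2 = p^2+q^2 := by rw [hl]; exact Real.sq_sqrt (by positivity)
  rw [← hl] at hdisj
  have hlpos : 0 < l := by linarith
  have hl4 : 2 * (1 - cos (β - α)) ≤ d^2 + 2 * d * (sin α + sin β) := by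
    have : 4 ≤ p^2+q^2 := by nlinarith
    rw [hp, hq] at this
    rw [cos_sub]
    nlinarith [sin_sq_add_cos_sq α, sin_sq_add_cos_sq β]
  have hF' := Fpos d α β hd hα0 hαβ hβ hl4 h
  have hsα := sin_nonneg_of_nonneg_of_le_pi hα0 hαπ
  have hγ1 : 0 < 1 - cos (β - α) := lt_of_le_of_lt (mul_nonneg hd hsα) h
  have hαπ' : α < π := by
    rcases eq_or_lt_of_le hαπ with hz | hz
    · exfalso
      have : β - α = 0 := by linarith
      rw [this] at hγ1; simp at hγ1
    · exact hz
  have hp0 : 0 ≤ p := by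
    rcases eq_or_lt_of_le hd with hz | hz
    · rw [← hz] at hl4; linarith
    · have : 0 < d * (d + 2 * (sin α + sin β)) := by linarith
      have := pos_of_mul_pos_right this hd
      linarith
  -- the direction of the line of centers
  have hcq : cos (arccos (q/l)) = q/l := by
    apply cos_arccos
    · rw [le_div_iff₀ hlpos]; nlinarith
    · rw [div_le_iff₀ hlpos]; nlinarith
  have hqt : q = l * cos (arccos (q/l)) := by rw [hcq]; field_simp
  have hpt : p = l * sin (arccos (q/l)) := by
    rw [sin_arccos, show 1 - (q/l)^2 = (p/l)^2 by field_simp; linarith,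
        Real.sqrt_sq (by positivity)]; field_simp
  obtain ⟨t, ht⟩ : ∃ t, t = arccos (q/l) := ⟨_, rfl⟩
  have ht0 : 0 ≤ t := by rw [ht]; exact arccos_nonneg _
  have htπ : t ≤ π := by rw [ht]; exact arccos_le_pi _
  rw [← ht] at hqt hpt
  have F1 : ∀ x, d * sin x + cos (x - β) + cos (x - α) = l * cos (t - x) := by
    intro x
    rw [cos_sub, cos_sub, cos_sub]
    linear_combination (-cos x) * hq + cos x * hqt + (-sin x) * hp + sin x * hpt
  have F2 : ∀ x, d * cos x - sin (x - β) - sin (x - α) = l * sin (t - x) := by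
    intro x
    rw [sin_sub, sin_sub, sin_sub]
    linear_combination (-cos x) * hp + cos x * hpt + sin x * hq - sin x * hqt
  have htα : α ≤ t := by
    by_contra hn
    push Not at hn
    have := F2 α
    rw [← neg_sub β α, sin_neg, sub_self, sin_zero] at this
    have h2 := sin_neg_of_neg_of_neg_pi_lt (x := t - α) (by linarith) (by linarith)
    nlinarith
  have hκ : cos (arccos (2/l)) = 2/l := by
    apply cos_arccos
    · have : 0 < 2/l := by positivity
      linarith
    · rw [div_le_iff₀ hlpos]; linarith
  obtain ⟨κ, hk⟩ : ∃ κ, κ = arccos (2/l) := ⟨_, rfl⟩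
  have hk0 : 0 ≤ κ := by rw [hk]; exact arccos_nonneg _
  have hkπ : κ ≤ π := by rw [hk]; exact arccos_le_pi _
  rw [← hk] at hκ
  have hκ2 : l * cos κ = 2 := by rw [hκ]; field_simp
  obtain ⟨θ, hθ⟩ : ∃ θ, θ = t - κ := ⟨_, rfl⟩
  have hθt : t - θ = κ := by linarith
  have G1 := F1 θ
  have G2 := F2 θ
  rw [hθt] at G1 G2
  rw [hκ2] at G1
  have hs0 : 0 ≤ d * cos θ - sin (θ - β) - sin (θ - α) := by
    rw [G2]; exact mul_nonneg hlpos.le (sin_nonneg_of_nonneg_of_le_pi hk0 hkπ)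
  have hθα : α ≤ θ := by
    by_contra hn
    push Not at hn
    have h1 : cos κ ≤ cos (t - α) := cos_le_cos_of_nonneg_of_le_pi (by linarith) hkπ (by linarith)
    have h2 := F1 α
    rw [← neg_sub β α, cos_neg, sub_self, cos_zero] at h2
    have := mul_le_mul_of_nonneg_left h1 hlpos.le
    linarith
  have hθπ : θ ≤ π := by linarith
  obtain ⟨s, hs⟩ : ∃ s, s = d * cos θ - sin (θ - β) - sin (θ - α) := ⟨_, rfl⟩
  have hx : 1 * (sin θ - sin α) + s * cos θ - (sin β - sin θ) = d := by
    have G1' := G1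
    rw [cos_sub, cos_sub] at G1'
    rw [hs, sin_sub, sin_sub]
    linear_combination - sin θ * G1' + (d + sin β + sin α) * (sin_sq_add_cos_sq θ)
  have hy : -1 * (cos θ - cos α) + s * sin θ + (cos β - cos θ) = 0 := by
    have G1' := G1
    rw [cos_sub, cos_sub] at G1'
    rw [hs, sin_sub, sin_sub]
    linear_combination cos θ * G1' - (cos β + cos α) * (sin_sq_add_cos_sq θ)
  rcases lt_or_ge θ β with hb | hb
  · obtain ⟨γ, hγ⟩ := path_exists α β θ d 1 (θ - α) s (θ - β + 2 * π) (Or.inl rfl)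
      (by linarith) (by linarith) (by linarith) (by ring)
      (by rw [show θ - (θ - β + 2 * π) = β - 2 * π by ring, cos_sub_two_pi])
      (by rw [show θ - (θ - β + 2 * π) = β - 2 * π by ring, sin_sub_two_pi])
      hx hy
    have := len_bound d α β θ hd hα0 hβ hθα hθπ hb G1
    exact ⟨_, γ, hγ, by linarith⟩
  · obtain ⟨γ, hγ⟩ := path_exists α β θ d 1 (θ - α) s (θ - β) (Or.inl rfl)
      (by linarith) (by linarith) (by linarith) (by ring)
      (by rw [show θ - (θ - β) = β by ring])
      (by rw [show θ - (θ - β) = β by ring])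
      hx hy
    have h1 := sin_nonneg_of_nonneg_of_le_pi (x := θ - α) (by linarith) (by linarith)
    have h2 := sin_nonneg_of_nonneg_of_le_pi (x := θ - β) (by linarith) (by linarith)
    have h3 : d * cos θ ≤ d := by nlinarith [cos_le_one θ]
    exact ⟨_, γ, hγ, by linarith⟩
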